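/- Let μ ∈ ℂ∖{0} and η ∈ ℂ∖{0}. There exist f, g, f′, g′ ∈ V₁(μ) and a nonzero constant c ∈ ℂ such that A(f)∘A(g) − A(f′)∘A(g′) = c·Id as linear operators on the space of functions ℂ → ℂ. In particular, the constant multiples of the identity operator form a subspace of 𝒱₂(μ). -/

import Mathlib

open Complex Filter

noncomputable section

/-- A meromorphic function is regular (analytic after removing a removable
singularity) at a point. -/
def RegularAt (g : ℂ → ℂ) (p : ℂ) : Prop :=
  ∃ h : ℂ → ℂ, AnalyticAt ℂ h p ∧ ∀ᶠ z in nhdsWithin p {p}ᶜ, g z = h z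

/-- `g` has at most a simple pole at `p`, with residue `r`. -/
def SimplePoleAt (g : ℂ → ℂ) (p r : ℂ) : Prop :=
  ∃ h : ℂ → ℂ, AnalyticAt ℂ h p ∧ ∀ᶠ z in nhdsWithin p {p}ᶜ, g z = r / (z - p) + h z

/-- `p` belongs to the half-lattice `Λ/2 = {(m+nτ)/2 : m,n ∈ ℤ}`. -/
def HalfLattice (τ p : ℂ) : Prop := ∃ m n : ℤ, p = ((m : ℂ) + τ * n) / 2

/-- Membership in `V₁(μ)`: meromorphic, `f(z+1)=f(z)`, `f(z+τ)=μf(z)`, with at most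
simple poles, all lying in `Λ/2`. -/
def memV1 (τ μ : ℂ) (f : ℂ → ℂ) : Prop :=
  MeromorphicOn f Set.univ ∧ (∀ z, f (z + 1) = f z) ∧ (∀ z, f (z + τ) = μ * f z) ∧
  (∀ p : ℂ, ¬ HalfLattice τ p → RegularAt f p) ∧
  (∀ p : ℂ, HalfLattice τ p → ∃ r : ℂ, SimplePoleAt f p r)

/-- The analytic difference operator `A(f)`, `(A(f)F)(z) = f(z)F(z+η) + f(−z)F(z−η)`. -/
def ADO (η : ℂ) (f : ℂ → ℂ) : Module.End ℂ (ℂ → ℂ) where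
  toFun F := fun z => f z * F (z + η) + f (-z) * F (z - η)
  map_add' F G := by funext z; simp [Pi.add_apply]; ring
  map_smul' c F := by funext z; simp [Pi.smul_apply, smul_eq_mul]; ring

/-- `𝒱_k(μ)`: the linear span of the `k`-fold products `A(f₁)∘⋯∘A(f_k)` with
`f₁,…,f_k ∈ V₁(μ)`. -/
def Vcal (τ μ η : ℂ) (k : ℕ) : Submodule ℂ (Module.End ℂ (ℂ → ℂ)) :=
  Submodule.span ℂ {T | ∃ f : Fin k → (ℂ → ℂ), (∀ i, memV1 τ μ (f i)) ∧
    T = (List.ofFn fun i => ADO η (f i)).prod}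

/-!
Let `H` be the odd theta function of degree four whose zeros are simple and form `Λ/2`, and let
`P, S` and `Q, R` be two pairs of theta functions of degree two, each pair with a common factor of
automorphy. With
`f = P(z)Q(z+η)/H(z)`, `g = R(z)S(z+η)/H(z)`, `f′ = P(z)R(z+η)/H(z)`, `g′ = Q(z)S(z+η)/H(z)`,
the terms in `F(z ± 2η)` of `A(f)A(g)F - A(f′)A(g′)F` cancel by symmetry in `Q` and `R`. What is
left is `F(z)` times an expression in `P(z)S(-z) - S(z)P(-z)` and `Q(z)R(-z) - R(z)Q(-z)`. Divided
by `H`, each of these is an even element of `V₁(1)`. Such an element is invariant under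
`z ↦ 2p - z` for every `p ∈ Λ/2`, which rules out a simple pole at `p`, so it is constant by
Liouville's theorem. Generic zeros of `P, S, Q, R` make both constants nonzero.
-/

open scoped Topology

local notation "𝕢" => Function.Periodic.qParam 1

section RemovableSingularity

variable {f : ℂ → ℂ} {p : ℂ}

/-- The extension of `f` across its removable singularities: the value at `z` is the punctured
limit of `f` at `z`, a junk value where that limit does not exist. -/
def removeSingularities (f : ℂ → ℂ) (z : ℂ) : ℂ := limUnder (𝓝[≠] z) f

lemma removeSingularities_eq (hf : ContinuousAt f p) : removeSingularities f p = f p :=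
  (hf.tendsto.mono_left nhdsWithin_le_nhds).limUnder_eq

lemma removeSingularities_periodic {ω : ℂ} (hf : Function.Periodic f ω) :
    Function.Periodic (removeSingularities f) ω := fun z => by
  have hmap : map (· + ω) (𝓝[≠] z) = 𝓝[≠] (z + ω) :=
    (Homeomorph.addRight ω).map_punctured_nhds_eq z
  rw [removeSingularities, removeSingularities, limUnder, ← hmap, Filter.map_map,
    show f ∘ (· + ω) = f from funext hf, limUnder]

lemma RegularAt.analyticAt_removeSingularities (hf : RegularAt f p) :
    AnalyticAt ℂ (removeSingularities f) p := by
  obtain ⟨h, hh, hfh⟩ := hf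
  have limit_eq {z : ℂ} (hz : ContinuousAt h z) (hfz : f =ᶠ[𝓝[≠] z] h) :
      removeSingularities f z = h z :=
    ((hz.tendsto.mono_left nhdsWithin_le_nhds).congr' hfz.symm).limUnder_eq
  refine hh.congr (eventuallyEq_nhds_of_eventuallyEq_nhdsNE ?_
    (limit_eq hh.continuousAt hfh).symm)
  filter_upwards [hh.eventually_continuousAt.filter_mono nhdsWithin_le_nhds,
    eventually_nhdsNE_eventually_nhds_iff.2 hfh] with z hz hfz
  exact (limit_eq hz (hfz.filter_mono nhdsWithin_le_nhds)).symm

end RemovableSingularity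

section Liouville

variable {τ : ℂ} {f : ℂ → ℂ}

lemma linearIndependent_one_of_im_pos (hτ : 0 < τ.im) : LinearIndependent ℝ ![1, τ] := by
  refine (LinearIndependent.pair_iff' one_ne_zero).2 fun a ha => hτ.ne' ?_
  simp [← ha]

lemma apply_eq_apply_of_doubly_periodic (hτ : 0 < τ.im) (hf : Differentiable ℂ f)
    (h1 : Function.Periodic f 1) (h2 : Function.Periodic f τ) (z w : ℂ) : f z = f w := by
  let L : PeriodPair := ⟨1, τ, linearIndependent_one_of_im_pos hτ⟩
  refine hf.apply_eq_apply_of_bounded (IsZLattice.isCompact_range_of_periodic L.lattice f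
    hf.continuous fun z ω hω => ?_).isBounded z w
  obtain ⟨m, n, rfl⟩ := PeriodPair.mem_lattice.1 hω
  exact ((h1.int_mul m).add_period (h2.int_mul n)) z

lemma exists_eq_const_of_regularAt (hτ : 0 < τ.im) (hf : ∀ p, RegularAt f p)
    (h1 : Function.Periodic f 1) (h2 : Function.Periodic f τ) :
    ∃ C, ∀ z, ContinuousAt f z → f z = C := by
  have entire : Differentiable ℂ (removeSingularities f) := fun p =>
    (hf p).analyticAt_removeSingularities.differentiableAt
  refine ⟨removeSingularities f 0, fun z hz => ?_⟩
  rw [← removeSingularities_eq hz]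
  exact apply_eq_apply_of_doubly_periodic hτ entire (removeSingularities_periodic h1)
    (removeSingularities_periodic h2) z 0

end Liouville

section Even

variable {τ p r : ℂ} {f : ℂ → ℂ}

lemma tendsto_two_mul_sub_nhdsNE (p : ℂ) : Tendsto (fun z => 2 * p - z) (𝓝[≠] p) (𝓝[≠] p) := by
  refine ((Homeomorph.subLeft (2 * p)).map_punctured_nhds_eq p).le.trans_eq ?_
  rw [Homeomorph.subLeft_apply, two_mul, add_sub_cancel_right]

-- The principal part is odd about `p`, so it must vanish.
lemma SimplePoleAt.regularAt_of_symm (hf : SimplePoleAt f p r)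
    (hsymm : ∀ z, f (2 * p - z) = f z) : RegularAt f p := by
  obtain ⟨h, hh, hfh⟩ := hf
  have hlim : Tendsto (fun z => (z - p) * (h (2 * p - z) - h z)) (𝓝[≠] p) (𝓝 0) := by
    have hrefl : ContinuousAt (fun z => h (2 * p - z)) p :=
      ContinuousAt.comp (by simpa [two_mul] using hh.continuousAt) (by fun_prop)
    have hprod : ContinuousAt (fun z => (z - p) * (h (2 * p - z) - h z)) p :=
      (continuousAt_id.sub continuousAt_const).mul (hrefl.sub hh.continuousAt)
    simpa using hprod.tendsto.mono_left nhdsWithin_le_nhds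
  have hconst : ∀ᶠ z in 𝓝[≠] p, (z - p) * (h (2 * p - z) - h z) = 2 * r := by
    filter_upwards [hfh, (tendsto_two_mul_sub_nhdsNE p).eventually hfh, self_mem_nhdsWithin]
      with z hz hz' hzp
    have hsub : z - p ≠ 0 := sub_ne_zero.2 hzp
    rw [hsymm, hz, show 2 * p - z - p = -(z - p) by ring] at hz'
    generalize h (2 * p - z) = h' at hz' ⊢
    field_simp at hz'
    linear_combination -hz'
  have hr : 2 * r = 0 := tendsto_nhds_unique (tendsto_const_nhds.congr' (.symm hconst)) hlim
  obtain rfl : r = 0 := by simpa using hr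
  exact ⟨h, hh, by simpa using hfh⟩

lemma memV1.exists_eq_const_of_even (hτ : 0 < τ.im) (hf : memV1 τ 1 f)
    (heven : ∀ z, f (-z) = f z) : ∃ C, ∀ z, ContinuousAt f z → f z = C := by
  obtain ⟨-, h1, h2, hreg, hpole⟩ := hf
  replace h1 : Function.Periodic f 1 := h1
  replace h2 : Function.Periodic f τ := fun z => by rw [h2, one_mul]
  refine exists_eq_const_of_regularAt hτ (fun p => ?_) h1 h2
  by_cases hp : HalfLattice τ p
  · obtain ⟨r, hr⟩ := hpole p hp
    refine hr.regularAt_of_symm fun z => ?_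
    obtain ⟨m, n, rfl⟩ := hp
    rw [← heven z, ← ((h1.int_mul m).add_period (h2.int_mul n)) (-z)]
    congr 1
    ring
  · exact hreg p hp

end Even

section Exponential

open Function.Periodic

variable {h : ℝ}

lemma qParam_zero : qParam h 0 = 1 := by simp [qParam]

lemma qParam_add (z w : ℂ) : qParam h (z + w) = qParam h z * qParam h w := by
  simp only [qParam, mul_add, add_div, exp_add]

lemma qParam_neg (z : ℂ) : qParam h (-z) = (qParam h z)⁻¹ := by
  simp only [qParam, mul_neg, neg_div, exp_neg]

lemma qParam_nat_mul (n : ℕ) (z : ℂ) : qParam h (n * z) = qParam h z ^ n := by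
  rw [qParam, qParam, ← exp_nat_mul]
  ring_nf

lemma qParam_eq_one_iff (hh : h ≠ 0) {z : ℂ} : qParam h z = 1 ↔ ∃ n : ℤ, z = n * h := by
  have hh' : (h : ℂ) ≠ 0 := ofReal_ne_zero.2 hh
  refine exp_eq_one_iff.trans (exists_congr fun n => ?_)
  rw [div_eq_iff hh', mul_right_comm (n : ℂ), mul_comm _ z, mul_left_inj' two_pi_I_ne_zero]

lemma hasDerivAt_qParam (z : ℂ) :
    HasDerivAt (qParam h) (qParam h z * (2 * Real.pi * I / h)) z := by
  simpa using! (((hasDerivAt_id z).const_mul (2 * Real.pi * I)).div_const (h : ℂ)).cexp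

lemma qParam_one_periodic : Function.Periodic 𝕢 1 := fun z => by
  have h1 : 𝕢 1 = 1 := (qParam_eq_one_iff one_ne_zero).2 ⟨1, by simp⟩
  rw [qParam_add, h1, mul_one]

end Exponential

section QPochhammer

variable {q : ℂ}

/-- The infinite `q`-Pochhammer symbol `(a; q)_∞`, meaningful for `‖q‖ < 1`. -/
def qPochhammer (q a : ℂ) : ℂ := ∏' n : ℕ, (1 - a * q ^ n)

lemma summable_norm_mul_pow (hq : ‖q‖ < 1) (a : ℂ) : Summable fun n : ℕ => ‖-(a * q ^ n)‖ := by
  simpa using (summable_geometric_of_lt_one (norm_nonneg _) hq).mul_left ‖a‖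

lemma qPochhammer_eq (hq : ‖q‖ < 1) (a : ℂ) :
    qPochhammer q a = (1 - a) * qPochhammer q (a * q) := by
  have hmul : Multipliable fun n : ℕ => 1 - a * q ^ (n + 1) := by
    simpa only [pow_succ', ← mul_assoc, ← sub_eq_add_neg] using
      multipliable_one_add_of_summable (summable_norm_mul_pow hq (a * q))
  rw [qPochhammer, tprod_eq_zero_mul' (f := fun n => 1 - a * q ^ n) hmul, pow_zero, mul_one]
  simp only [qPochhammer, pow_succ', mul_assoc]

lemma qPochhammer_ne_zero (hq : ‖q‖ < 1) {a : ℂ} (ha : ∀ n : ℕ, a * q ^ n ≠ 1) :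
    qPochhammer q a ≠ 0 := by
  simp only [qPochhammer, sub_eq_add_neg]
  refine tprod_one_add_ne_zero_of_summable (fun n => ?_) (summable_norm_mul_pow hq a)
  rw [← sub_eq_add_neg]
  exact sub_ne_zero.2 (ha n).symm

lemma qPochhammer_self_ne_zero (hq : ‖q‖ < 1) : qPochhammer q q ≠ 0 := by
  refine qPochhammer_ne_zero hq fun n hn => ?_
  have hlt : ‖q ^ (n + 1)‖ < 1 := by
    rw [norm_pow]
    exact pow_lt_one₀ (norm_nonneg q) hq n.succ_ne_zero
  rw [pow_succ', hn, norm_one] at hlt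
  exact hlt.false

lemma differentiable_qPochhammer (hq : ‖q‖ < 1) : Differentiable ℂ (qPochhammer q) := by
  have hprod : HasProdLocallyUniformlyOn (fun (n : ℕ) a => 1 + -(a * q ^ n)) (qPochhammer q)
      Set.univ := by
    simp only [funext (qPochhammer.eq_1 q), sub_eq_add_neg]
    refine hasProdLocallyUniformlyOn_of_forall_compact isOpen_univ fun K _ hK => ?_
    obtain ⟨C, hC⟩ := hK.isBounded.exists_norm_le
    refine ((summable_geometric_of_lt_one (norm_nonneg _) hq).mul_left
      C).hasProdUniformlyOn_nat_one_add hK (.of_forall fun n a ha => ?_) fun n => by fun_prop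
    rw [norm_neg, norm_mul, norm_pow]
    gcongr
    exact hC a ha
  rw [← differentiableOn_univ]
  exact hprod.differentiableOn (.of_forall fun s => by
    simpa [Finset.prod_fn] using DifferentiableOn.finsetProd fun _ _ => by fun_prop) isOpen_univ

end QPochhammer

section QuasiPeriods

variable {f : ℂ → ℂ} {ω : ℂ}

/-- The quasi-periods of `f`: the translations that multiply `f` by a nowhere vanishing entire
function. -/
def quasiPeriods (f : ℂ → ℂ) : AddSubgroup ℂ where
  carrier := {ω | ∃ u : ℂ → ℂ, Differentiable ℂ u ∧ (∀ z, u z ≠ 0) ∧ ∀ z, f (z + ω) = u z * f z}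
  zero_mem' := ⟨1, differentiable_const _, fun _ => one_ne_zero, by simp⟩
  add_mem' := by
    rintro ω ω' ⟨u, hu, hu0, hfu⟩ ⟨v, hv, hv0, hfv⟩
    refine ⟨fun z => v (z + ω) * u z, by fun_prop, fun z => mul_ne_zero (hv0 _) (hu0 z),
      fun z => ?_⟩
    rw [← add_assoc, hfv, hfu, mul_assoc]
  neg_mem' := by
    rintro ω ⟨u, hu, hu0, hfu⟩
    refine ⟨fun z => (u (z + -ω))⁻¹, (hu.comp (by fun_prop)).inv fun z => hu0 _,
      fun z => inv_ne_zero (hu0 _), fun z => ?_⟩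
    rw [eq_inv_mul_iff_mul_eq₀ (hu0 _), ← hfu, neg_add_cancel_right]

lemma simple_zero_add_of_mem_quasiPeriods (hf : Differentiable ℂ f) (hω : ω ∈ quasiPeriods f)
    {p : ℂ} (h0 : f p = 0) (h1 : deriv f p ≠ 0) : f (p + ω) = 0 ∧ deriv f (p + ω) ≠ 0 := by
  obtain ⟨u, hu, hu0, hfu⟩ := hω
  refine ⟨by rw [hfu, h0, mul_zero], ?_⟩
  have hderiv := ((hu p).hasDerivAt.fun_mul (hf p).hasDerivAt).deriv
  rw [← funext hfu, h0, mul_zero, zero_add, deriv_comp_add_const] at hderiv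
  rw [hderiv]
  exact mul_ne_zero (hu0 p) h1

end QuasiPeriods

section Theta

variable {τ z : ℂ}

/-- The period lattice `Λ = ℤ + τℤ`. -/
def periodLattice (τ : ℂ) : AddSubgroup ℂ := AddSubgroup.closure {1, τ}

lemma mem_periodLattice_iff : z ∈ periodLattice τ ↔ ∃ m n : ℤ, m + n * τ = z := by
  simp [periodLattice, AddSubgroup.mem_closure_pair]

/-- The multiplicative theta function `(x; q)_∞ (q / x; q)_∞` in the coordinates `x = e^{2πiz}`,
`q = e^{2πiτ}`; it is the entire function vanishing exactly on the period lattice. -/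
def theta (τ z : ℂ) : ℂ := qPochhammer (𝕢 τ) (𝕢 z) * qPochhammer (𝕢 τ) (𝕢 (τ - z))

lemma norm_qParam_one_lt_one (hτ : 0 < τ.im) : ‖𝕢 τ‖ < 1 :=
  Function.Periodic.norm_qParam_lt_one one_pos hτ

lemma differentiable_theta (hτ : 0 < τ.im) : Differentiable ℂ (theta τ) := by
  have := differentiable_qPochhammer (norm_qParam_one_lt_one hτ)
  unfold theta
  fun_prop

lemma theta_periodic : Function.Periodic (theta τ) 1 := fun z => by
  rw [theta, theta, qParam_one_periodic, ← sub_sub, qParam_one_periodic.sub_eq]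

lemma theta_eq_one_sub_mul (hτ : 0 < τ.im) (z : ℂ) : theta τ z =
    (1 - 𝕢 z) * (qPochhammer (𝕢 τ) (𝕢 (z + τ)) * qPochhammer (𝕢 τ) (𝕢 (τ - z))) := by
  rw [theta, qPochhammer_eq (norm_qParam_one_lt_one hτ) (𝕢 z), qParam_add, mul_assoc]

lemma theta_add_tau (hτ : 0 < τ.im) (z : ℂ) : theta τ (z + τ) = -𝕢 (-z) * theta τ z := by
  have hx : 𝕢 z ≠ 0 := Function.Periodic.qParam_ne_zero z
  rw [theta_eq_one_sub_mul hτ z, theta, show τ - (z + τ) = -z by ring,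
    qPochhammer_eq (norm_qParam_one_lt_one hτ) (𝕢 (-z)), ← qParam_add, neg_add_eq_sub, qParam_neg]
  field_simp
  ring

lemma theta_neg (hτ : 0 < τ.im) (z : ℂ) : theta τ (-z) = -𝕢 (-z) * theta τ z := by
  rw [← theta_add_tau hτ, theta, theta, mul_comm, sub_neg_eq_add, add_comm τ z,
    sub_add_cancel_right]

lemma mem_periodLattice_of_theta_eq_zero (hτ : 0 < τ.im) (hz : theta τ z = 0) :
    z ∈ periodLattice τ := by
  have zero_of_factor {w : ℂ} (hw : qPochhammer (𝕢 τ) (𝕢 w) = 0) :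
      ∃ (n : ℕ) (m : ℤ), w + n * τ = m := by
    by_contra! hne
    refine qPochhammer_ne_zero (norm_qParam_one_lt_one hτ) (fun n hn => ?_) hw
    rw [← qParam_nat_mul, ← qParam_add, qParam_eq_one_iff one_ne_zero] at hn
    obtain ⟨m, hm⟩ := hn
    exact hne n m (by simpa using hm)
  rw [mem_periodLattice_iff]
  rcases mul_eq_zero.1 hz with hz | hz
  · obtain ⟨n, m, hm⟩ := zero_of_factor hz
    exact ⟨m, -n, by push_cast; linear_combination -hm⟩
  · obtain ⟨n, m, hm⟩ := zero_of_factor hz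
    exact ⟨-m, n + 1, by push_cast; linear_combination hm⟩

lemma theta_zero (hτ : 0 < τ.im) : theta τ 0 = 0 := by
  rw [theta_eq_one_sub_mul hτ, qParam_zero, sub_self, zero_mul]

lemma deriv_theta_zero_ne_zero (hτ : 0 < τ.im) : deriv (theta τ) 0 ≠ 0 := by
  have hq := norm_qParam_one_lt_one hτ
  have hP := differentiable_qPochhammer hq
  set G : ℂ → ℂ := fun z => qPochhammer (𝕢 τ) (𝕢 (z + τ)) * qPochhammer (𝕢 τ) (𝕢 (τ - z))
  have hG : DifferentiableAt ℂ G 0 := by fun_prop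
  have hG0 : G 0 ≠ 0 := by simp [G, qPochhammer_self_ne_zero hq]
  have hderiv := (((hasDerivAt_qParam (h := 1) 0).const_sub 1).fun_mul hG.hasDerivAt).deriv
  rw [funext (theta_eq_one_sub_mul hτ), hderiv]
  simp [qParam_zero, hG0, I_ne_zero, Real.pi_ne_zero]

lemma periodLattice_le_quasiPeriods_theta (hτ : 0 < τ.im) :
    periodLattice τ ≤ quasiPeriods (theta τ) := by
  refine (AddSubgroup.closure_le _).2 (Set.pair_subset ?_ ?_)
  · exact ⟨1, differentiable_const _, fun _ => one_ne_zero, fun z => by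
      rw [theta_periodic, Pi.one_apply, one_mul]⟩
  · exact ⟨fun z => -𝕢 (-z), by fun_prop,
      fun z => neg_ne_zero.2 (Function.Periodic.qParam_ne_zero _), theta_add_tau hτ⟩

lemma theta_simple_zero (hτ : 0 < τ.im) (hz : z ∈ periodLattice τ) :
    theta τ z = 0 ∧ deriv (theta τ) z ≠ 0 := by
  simpa using simple_zero_add_of_mem_quasiPeriods (differentiable_theta hτ)
    (periodLattice_le_quasiPeriods_theta hτ hz) (theta_zero hτ) (deriv_theta_zero_ne_zero hτ)

lemma theta_eq_zero_iff (hτ : 0 < τ.im) : theta τ z = 0 ↔ z ∈ periodLattice τ :=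
  ⟨mem_periodLattice_of_theta_eq_zero hτ, fun hz => (theta_simple_zero hτ hz).1⟩

end Theta

section SimplePole

variable {N D : ℂ → ℂ} {p : ℂ}

lemma analyticAt_dslope (hD : AnalyticAt ℂ D p) : AnalyticAt ℂ (dslope D p) p :=
  let ⟨_, hseries⟩ := hD
  hseries.has_fpower_series_dslope_fslope.analyticAt

lemma exists_simplePoleAt_div (hN : AnalyticAt ℂ N p) (hD : AnalyticAt ℂ D p) (h0 : D p = 0)
    (h1 : deriv D p ≠ 0) : ∃ r, SimplePoleAt (fun z => N z / D z) p r := by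
  let g : ℂ → ℂ := fun z => N z / dslope D p z
  have hg : AnalyticAt ℂ g p := hN.fun_div (analyticAt_dslope hD) (by rwa [dslope_same])
  refine ⟨g p, dslope g p, analyticAt_dslope hg, ?_⟩
  filter_upwards [self_mem_nhdsWithin] with z hz
  have hD_eq : D z = (z - p) * dslope D p z := by simpa [h0] using (sub_smul_dslope D p z).symm
  have hg_eq : (z - p) * dslope g p z = g z - g p := sub_smul_dslope g p z
  have hsub : z - p ≠ 0 := sub_ne_zero.2 hz
  calc N z / D z = g z / (z - p) := by rw [hD_eq, mul_comm, ← div_div]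
    _ = g p / (z - p) + dslope g p z := by
      rw [← sub_eq_iff_eq_add', ← sub_div, ← hg_eq, mul_div_cancel_left₀ _ hsub]

end SimplePole

/-- Theta functions of degree `d` and characteristic `α` with respect to `ℤ + τℤ`: entire
`1`-periodic functions whose factor of automorphy under `z ↦ z + τ` is `e^{2πi(α - dz)}`. -/
structure IsThetaFunction (τ : ℂ) (d : ℕ) (α : ℂ) (N : ℂ → ℂ) : Prop where
  differentiable : Differentiable ℂ N
  periodic : Function.Periodic N 1
  add_tau : ∀ z, N (z + τ) = 𝕢 (α - d * z) * N z

/-- The antisymmetrization `Q(z)R(-z) - R(z)Q(-z)` of the product `Q(z)R(-z)`. -/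
def skewProduct (Q R : ℂ → ℂ) (z : ℂ) : ℂ := Q z * R (-z) - R z * Q (-z)

lemma skewProduct_neg (Q R : ℂ → ℂ) (z : ℂ) : skewProduct Q R (-z) = -skewProduct Q R z := by
  rw [skewProduct, skewProduct, neg_neg]
  ring

namespace IsThetaFunction

variable {τ α β : ℂ} {d k : ℕ} {M N : ℂ → ℂ}

lemma mul (hM : IsThetaFunction τ d α M) (hN : IsThetaFunction τ k β N) :
    IsThetaFunction τ (d + k) (α + β) fun z => M z * N z where
  differentiable := hM.differentiable.mul hN.differentiable
  periodic := hM.periodic.mul hN.periodic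
  add_tau z := by
    rw [hM.add_tau, hN.add_tau, Nat.cast_add, add_mul, add_sub_add_comm, qParam_add,
      mul_mul_mul_comm]

lemma sub (hM : IsThetaFunction τ d α M) (hN : IsThetaFunction τ d α N) :
    IsThetaFunction τ d α fun z => M z - N z where
  differentiable := hM.differentiable.sub hN.differentiable
  periodic := hM.periodic.sub hN.periodic
  add_tau z := by rw [hM.add_tau, hN.add_tau, mul_sub]

lemma comp_add_const (hN : IsThetaFunction τ d α N) (η : ℂ) :
    IsThetaFunction τ d (α - d * η) fun z => N (z + η) where
  differentiable := hN.differentiable.comp (by fun_prop)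
  periodic := hN.periodic.add_const η
  add_tau z := by rw [add_right_comm, hN.add_tau, mul_add, sub_sub, add_comm (_ * z)]

lemma comp_neg (hN : IsThetaFunction τ d α N) :
    IsThetaFunction τ d (-α - d * τ) fun z => N (-z) where
  differentiable := hN.differentiable.comp (by fun_prop)
  periodic z := (congrArg N (neg_add' z 1)).trans (hN.periodic.sub_eq (-z))
  add_tau z := by
    have h := hN.add_tau (-(z + τ))
    rw [neg_add, neg_add_cancel_right] at h
    rw [neg_add, h, ← mul_assoc, ← qParam_add,
      show -α - d * τ - d * z + (α - d * (-z + -τ)) = 0 by ring, qParam_zero, one_mul]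

lemma skewProduct (hM : IsThetaFunction τ d α M) (hN : IsThetaFunction τ d α N) :
    IsThetaFunction τ (d + d) (-d * τ) (skewProduct M N) := by
  have h {Q R : ℂ → ℂ} (hQ : IsThetaFunction τ d α Q) (hR : IsThetaFunction τ d α R) :
      IsThetaFunction τ (d + d) (-d * τ) fun z => Q z * R (-z) := by
    have hchar : α + (-α - d * τ) = -d * τ := by ring
    exact hchar ▸ hQ.mul hR.comp_neg
  exact (h hM hN).sub (h hN hM)

end IsThetaFunction

lemma isThetaFunction_theta_sub_mul {τ : ℂ} (hτ : 0 < τ.im) (a b : ℂ) :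
    IsThetaFunction τ 2 (a + b) fun z => theta τ (z - a) * theta τ (z - b) where
  differentiable := by
    have := differentiable_theta hτ
    fun_prop
  periodic := (theta_periodic.sub_const a).mul (theta_periodic.sub_const b)
  add_tau z := by
    rw [add_sub_right_comm, add_sub_right_comm, theta_add_tau hτ, theta_add_tau hτ,
      show a + b - (2 : ℕ) * z = -(z - a) + -(z - b) by push_cast; ring, qParam_add]
    ring

section HalfTheta

variable {τ κ α z : ℂ} {N Q R : ℂ → ℂ}

/-- The odd theta function of degree four whose zeros are the half-lattice points. -/
def halfTheta (τ z : ℂ) : ℂ := 𝕢 (-z) * theta τ (2 * z)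

lemma halfLattice_iff : HalfLattice τ z ↔ 2 * z ∈ periodLattice τ := by
  rw [mem_periodLattice_iff]
  exact exists₂_congr fun m n =>
    ⟨fun h => by linear_combination -2 * h, fun h => by linear_combination -h / 2⟩

lemma halfTheta_neg (hτ : 0 < τ.im) (z : ℂ) : halfTheta τ (-z) = -halfTheta τ z := by
  rw [halfTheta, halfTheta, mul_neg, theta_neg hτ, neg_neg, neg_mul, mul_neg, ← mul_assoc,
    ← qParam_add, show z + -(2 * z) = -z by ring]

lemma isThetaFunction_halfTheta (hτ : 0 < τ.im) :
    IsThetaFunction τ 4 (-2 * τ) (halfTheta τ) where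
  differentiable := by
    have := differentiable_theta hτ
    unfold halfTheta
    fun_prop
  periodic z := by
    rw [halfTheta, halfTheta, neg_add', qParam_one_periodic.sub_eq, mul_add, two_mul 1, ← add_assoc,
      theta_periodic, theta_periodic]
  add_tau z := by
    have hfactor : 𝕢 (-(z + τ)) * (𝕢 (-(2 * z + τ)) * 𝕢 (-(2 * z))) =
        𝕢 (-2 * τ - (4 : ℕ) * z) * 𝕢 (-z) := by
      simp only [← qParam_add]
      congr 1
      push_cast
      ring
    rw [halfTheta, halfTheta, mul_add, two_mul τ, ← add_assoc, theta_add_tau hτ, theta_add_tau hτ]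
    linear_combination theta τ (2 * z) * hfactor

lemma halfTheta_eq_zero_iff (hτ : 0 < τ.im) : halfTheta τ z = 0 ↔ HalfLattice τ z := by
  rw [halfTheta, mul_eq_zero, or_iff_right (Function.Periodic.qParam_ne_zero _),
    theta_eq_zero_iff hτ, halfLattice_iff]

lemma deriv_halfTheta_ne_zero (hτ : 0 < τ.im) (hz : HalfLattice τ z) :
    deriv (halfTheta τ) z ≠ 0 := by
  obtain ⟨h0, h1⟩ := theta_simple_zero hτ (halfLattice_iff.1 hz)
  have hexp : DifferentiableAt ℂ (fun w => 𝕢 (-w)) z := by fun_prop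
  have htheta : HasDerivAt (fun w => theta τ (2 * w)) (deriv (theta τ) (2 * z) * 2) z := by
    simpa using! (differentiable_theta hτ (2 * z)).hasDerivAt.comp z
      ((hasDerivAt_id z).const_mul 2)
  have hderiv := (hexp.hasDerivAt.fun_mul htheta).deriv
  rw [h0, mul_zero, zero_add] at hderiv
  exact hderiv.trans_ne
    (mul_ne_zero (Function.Periodic.qParam_ne_zero _) (mul_ne_zero h1 two_ne_zero))

lemma analyticAt_div_halfTheta (hτ : 0 < τ.im) (hN : Differentiable ℂ N)
    (hz : ¬ HalfLattice τ z) : AnalyticAt ℂ (fun z => N z / halfTheta τ z) z :=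
  (hN.analyticAt z).fun_div ((isThetaFunction_halfTheta hτ).differentiable.analyticAt z)
    (mt (halfTheta_eq_zero_iff hτ).1 hz)

lemma memV1_div_halfTheta (hτ : 0 < τ.im) (hN : IsThetaFunction τ 4 κ N) :
    memV1 τ (𝕢 (κ + 2 * τ)) fun z => N z / halfTheta τ z := by
  have hH := isThetaFunction_halfTheta hτ
  refine ⟨fun z _ => (hN.differentiable.analyticAt z).meromorphicAt.fun_div
    (hH.differentiable.analyticAt z).meromorphicAt, hN.periodic.div hH.periodic, fun z => ?_,
    fun p hp => ⟨_, analyticAt_div_halfTheta hτ hN.differentiable hp, .of_forall fun _ => rfl⟩,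
    fun p hp => exists_simplePoleAt_div (hN.differentiable.analyticAt p)
      (hH.differentiable.analyticAt p) ((halfTheta_eq_zero_iff hτ).2 hp)
      (deriv_halfTheta_ne_zero hτ hp)⟩
  simp only [hN.add_tau, hH.add_tau]
  rw [show κ - (4 : ℕ) * z = κ + 2 * τ + (-2 * τ - (4 : ℕ) * z) by ring, qParam_add, mul_assoc,
    mul_div_assoc, mul_div_mul_left _ _ (Function.Periodic.qParam_ne_zero _)]

lemma memV1_mul_comp_add_div_halfTheta {β η : ℂ} {M : ℂ → ℂ} (hτ : 0 < τ.im)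
    (hM : IsThetaFunction τ 2 α M) (hN : IsThetaFunction τ 2 β N)
    (hκ : α + β = κ - 2 * τ + 2 * η) :
    memV1 τ (𝕢 κ) fun z => M z * N (z + η) / halfTheta τ z := by
  have hmem := memV1_div_halfTheta hτ (hM.mul (hN.comp_add_const η))
  rwa [Nat.cast_ofNat, show α + (β - 2 * η) + 2 * τ = κ by linear_combination hκ] at hmem

lemma exists_skewProduct_eq_mul_halfTheta (hτ : 0 < τ.im) (hQ : IsThetaFunction τ 2 α Q)
    (hR : IsThetaFunction τ 2 α R) :
    ∃ C, ∀ z, ¬ HalfLattice τ z → skewProduct Q R z = C * halfTheta τ z := by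
  have hmem : memV1 τ 1 fun z => skewProduct Q R z / halfTheta τ z := by
    simpa [qParam_zero] using memV1_div_halfTheta hτ (hQ.skewProduct hR)
  obtain ⟨C, hC⟩ := hmem.exists_eq_const_of_even hτ fun z => by
    rw [skewProduct_neg, halfTheta_neg hτ, neg_div_neg_eq]
  exact ⟨C, fun z hz => (div_eq_iff (mt (halfTheta_eq_zero_iff hτ).1 hz)).1 (hC z
    (analyticAt_div_halfTheta hτ (hQ.skewProduct hR).differentiable hz).continuousAt)⟩

end HalfTheta

section Generic

variable {τ α : ℂ}

lemma countable_periodLattice (τ : ℂ) : (periodLattice τ : Set ℂ).Countable := by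
  refine (Set.countable_range fun x : ℤ × ℤ => (x.1 : ℂ) + x.2 * τ).mono fun z hz => ?_
  obtain ⟨m, n, rfl⟩ := mem_periodLattice_iff.1 hz
  exact ⟨(m, n), rfl⟩

lemma exists_notMem_sub_notMem {s : Set ℂ} (hs : s.Countable) (K : ℂ) :
    ∃ t, t ∉ s ∧ K - t ∉ s := by
  have hcount : (s ∪ (fun t => K - t) ⁻¹' s).Countable :=
    hs.union (hs.preimage sub_right_injective)
  obtain ⟨t, ht⟩ := (hcount.dense_compl ℂ).nonempty
  exact ⟨t, not_or.1 ht⟩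

lemma exists_skewProduct_ne_zero (hτ : 0 < τ.im) (hα : α ∉ periodLattice τ) :
    ∃ Q R : ℂ → ℂ, IsThetaFunction τ 2 α Q ∧ IsThetaFunction τ 2 α R ∧
      ∃ a, ¬ HalfLattice τ a ∧ skewProduct Q R a ≠ 0 := by
  obtain ⟨s, hs, -⟩ := exists_notMem_sub_notMem (countable_periodLattice τ) 0
  obtain ⟨t, ht, ht'⟩ := exists_notMem_sub_notMem (countable_periodLattice τ) (α - s)
  obtain ⟨a, rfl⟩ : ∃ a, 2 * a = s := ⟨s / 2, by ring⟩
  let Q z := theta τ (z - a) * theta τ (z - (α - a))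
  let R z := theta τ (z - (a + t)) * theta τ (z - (α - (a + t)))
  have theta_neg_ne_zero {w : ℂ} (hw : w ∉ periodLattice τ) : theta τ (-w) ≠ 0 := by
    rwa [Ne, theta_eq_zero_iff hτ, neg_mem_iff]
  have hQa : Q a = 0 := by simp [Q, theta_zero hτ]
  have hRa : R a ≠ 0 := by
    have h1 : a - (a + t) = -t := by ring
    have h2 : a - (α - (a + t)) = -(α - 2 * a - t) := by ring
    simpa only [R, h1, h2] using mul_ne_zero (theta_neg_ne_zero ht) (theta_neg_ne_zero ht')
  have hQa' : Q (-a) ≠ 0 := by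
    have h1 : -a - a = -(2 * a) := by ring
    have h2 : -a - (α - a) = -α := by ring
    simpa only [Q, h1, h2] using mul_ne_zero (theta_neg_ne_zero hs) (theta_neg_ne_zero hα)
  refine ⟨Q, R, by simpa using isThetaFunction_theta_sub_mul hτ a (α - a),
    by simpa using isThetaFunction_theta_sub_mul hτ (a + t) (α - (a + t)),
    a, mt halfLattice_iff.1 hs, ?_⟩
  rw [skewProduct, hQa, zero_mul, zero_sub]
  exact neg_ne_zero.2 (mul_ne_zero hRa hQa')

lemma exists_skewProduct_eq (hτ : 0 < τ.im) (hα : α ∉ periodLattice τ) :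
    ∃ Q R : ℂ → ℂ, IsThetaFunction τ 2 α Q ∧ IsThetaFunction τ 2 α R ∧
      ∃ C ≠ 0, ∀ z, ¬ HalfLattice τ z → skewProduct Q R z = C * halfTheta τ z := by
  obtain ⟨Q, R, hQ, hR, a, ha, hQRa⟩ := exists_skewProduct_ne_zero hτ hα
  obtain ⟨C, hC⟩ := exists_skewProduct_eq_mul_halfTheta hτ hQ hR
  refine ⟨Q, R, hQ, hR, C, fun hC0 => hQRa ?_, hC⟩
  rw [hC a ha, hC0, zero_mul]

end Generic

section DifferenceOperators

variable {τ η : ℂ}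

-- The cross terms `F (z ± 2η)` carry the products `P(z) Q(z + η) R(z + η) S(z + 2η)` and
-- `P(-z) Q(-z + η) R(-z + η) S(-z + 2η)`, which are symmetric in `Q` and `R` and so cancel.
lemma ADO_mul_sub_ADO_mul_apply {H P Q R S : ℂ → ℂ} {C C' z : ℂ} (hH : ∀ z, H (-z) = -H z)
    (hPS : skewProduct P S z = C * H z)
    (hQR₁ : skewProduct Q R (z + η) = C' * H (z + η))
    (hQR₂ : skewProduct Q R (z - η) = C' * H (z - η))
    (h0 : H z ≠ 0) (h1 : H (z + η) ≠ 0) (h2 : H (z - η) ≠ 0) (F : ℂ → ℂ) :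
    (ADO η (fun z => P z * Q (z + η) / H z) * ADO η (fun z => R z * S (z + η) / H z) -
      ADO η (fun z => P z * R (z + η) / H z) * ADO η (fun z => Q z * S (z + η) / H z)) F z =
      -(C * C') * F z := by
  simp only [ADO, LinearMap.sub_apply, Module.End.mul_apply, LinearMap.coe_mk, AddHom.coe_mk,
    Pi.sub_apply, add_sub_cancel_right, sub_add_cancel, show -(z + η) + η = -z by ring,
    show -z + η = -(z - η) by ring, hH]
  simp only [skewProduct] at hPS hQR₁ hQR₂
  field_simp
  linear_combination -P z * S (-z) * F z * H (z - η) * hQR₁ +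
    H (z + η) * P (-z) * S z * F z * hQR₂ - F z * C' * H (z + η) * H (z - η) * hPS

lemma ADO_mul_ADO_mem_Vcal {μ : ℂ} {f g : ℂ → ℂ} (hf : memV1 τ μ f) (hg : memV1 τ μ g) :
    ADO η f * ADO η g ∈ Vcal τ μ η 2 :=
  Submodule.subset_span ⟨![f, g], by simp [Fin.forall_fin_two, hf, hg], by simp [List.ofFn_succ]⟩

end DifferenceOperators

/-- there exist `f, g, f′, g′ ∈ V₁(μ)` and a nonzero constant `c` with
`A(f)∘A(g) − A(f′)∘A(g′) = c·Id` (as operators, i.e. pointwise away from the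
half-lattice points where the meromorphic coefficients have their poles);
in particular the constant multiples of the identity form a subspace of `𝒱₂(μ)`. -/
theorem statement3 (τ : ℂ) (hτ : 0 < τ.im) (μ : ℂ) (hμ : μ ≠ 0) (η : ℂ) (hη : η ≠ 0) :
    (∃ f g f' g' : ℂ → ℂ, memV1 τ μ f ∧ memV1 τ μ g ∧ memV1 τ μ f' ∧ memV1 τ μ g' ∧
      ∃ c : ℂ, c ≠ 0 ∧ ∀ F : ℂ → ℂ, ∀ z : ℂ,
        ¬ HalfLattice τ z → ¬ HalfLattice τ (z + η) → ¬ HalfLattice τ (z - η) →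
        ((ADO η f * ADO η g - ADO η f' * ADO η g') F) z = c * F z) ∧
    (∀ c : ℂ, ∃ T ∈ Vcal τ μ η 2, ∀ F : ℂ → ℂ, ∀ z : ℂ,
        ¬ HalfLattice τ z → ¬ HalfLattice τ (z + η) → ¬ HalfLattice τ (z - η) →
        (T F) z = c * F z) := by
  obtain ⟨κ, rfl⟩ : ∃ κ, 𝕢 κ = μ := ⟨_, Function.Periodic.qParam_right_inv one_ne_zero hμ⟩
  obtain ⟨α, hα, hβ⟩ := exists_notMem_sub_notMem (countable_periodLattice τ) (κ - 2 * τ + 2 * η)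
  obtain ⟨P, S, hP, hS, C, hC, hPS⟩ := exists_skewProduct_eq hτ hα
  obtain ⟨Q, R, hQ, hR, C', hC', hQR⟩ := exists_skewProduct_eq hτ hβ
  have hf := memV1_mul_comp_add_div_halfTheta hτ hP hQ (add_sub_cancel _ _)
  have hg := memV1_mul_comp_add_div_halfTheta hτ hR hS (sub_add_cancel _ _)
  have hf' := memV1_mul_comp_add_div_halfTheta hτ hP hR (add_sub_cancel _ _)
  have hg' := memV1_mul_comp_add_div_halfTheta hτ hQ hS (sub_add_cancel _ _)
  have hc : -(C * C') ≠ 0 := neg_ne_zero.2 (mul_ne_zero hC hC')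
  have scalar F z (h0 : ¬ HalfLattice τ z) (h1 : ¬ HalfLattice τ (z + η))
      (h2 : ¬ HalfLattice τ (z - η)) :=
    ADO_mul_sub_ADO_mul_apply (halfTheta_neg hτ) (hPS z h0) (hQR _ h1) (hQR _ h2)
      (mt (halfTheta_eq_zero_iff hτ).1 h0) (mt (halfTheta_eq_zero_iff hτ).1 h1)
      (mt (halfTheta_eq_zero_iff hτ).1 h2) F
  refine ⟨⟨_, _, _, _, hf, hg, hf', hg', _, hc, scalar⟩, fun c =>
    ⟨(c / -(C * C')) • _, Submodule.smul_mem _ _ (Submodule.sub_mem _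
      (ADO_mul_ADO_mem_Vcal hf hg) (ADO_mul_ADO_mem_Vcal hf' hg')), fun F z h0 h1 h2 => ?_⟩⟩
  rw [LinearMap.smul_apply, Pi.smul_apply, scalar F z h0 h1 h2, smul_eq_mul, ← mul_assoc,
    div_mul_cancel₀ _ hc]
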